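/- Suppose $Y$ is a boundedly compact metric space, $X \subset Y$, $\varrho$ is the geodesic (intrinsic) pseudometric on $X$ defined via lengths of continuous paths in $X$, $\varrho$ is continuous, $a, x \in X$, and $b = \varrho(a,x) < \infty$. Then there exists a map $g : \mathbf{R} \to Y$ with $g(0) = a$, $g(b) = x$, $\mathrm{Lip}\, g \leq 1$, and $\varrho(a, g(\upsilon)) = \upsilon$ whenever $0 \leq \upsilon \leq b$ and $g(\upsilon) \in X$. -/

import Mathlib

open Set Filter Topology

section Variation

variable {E : Type*} [PseudoEMetricSpace E]

/-- Additivity of the variation on consecutive compact intervals. -/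
theorem eVariationOn_Icc_add_Icc (f : ℝ → E) {r s t : ℝ} (hrs : r ≤ s) (hst : s ≤ t) :
    eVariationOn f (Icc r s) + eVariationOn f (Icc s t) = eVariationOn f (Icc r t) := by
  simpa using eVariationOn.Icc_add_Icc f (s := univ) hrs hst (mem_univ s)

/-- If the functions `p u` are monotone reparametrisations depending continuously on `u`, then
the variation of `f ∘ p u` is lower semicontinuous in `u`. -/
theorem lowerSemicontinuous_eVariationOn_comp {f : ℝ → E} (hf : Continuous f) (S : Set ℝ)
    {p : ℝ → ℝ → ℝ} (hp : ∀ v, Continuous fun u => p u v) :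
    LowerSemicontinuous fun u => eVariationOn (fun v => f (p u v)) S := fun u _ hc =>
  eVariationOn.lowerSemicontinuous_aux (F := fun u v => f (p u v))
    (fun v _ => (hf.comp (hp v)).tendsto u) hc

theorem eVariationOn_min_eq (f : ℝ → E) {s t u : ℝ} (hu : u ∈ Icc s t) :
    eVariationOn (fun v => f (min u v)) (Icc s t) = eVariationOn f (Icc s u) := by
  rw [← eVariationOn_Icc_add_Icc _ hu.1 hu.2,
    eVariationOn.congr (g := f) fun v hv => by simp [hv.2],
    eVariationOn.constant_on (s := Icc u t), add_zero]
  rintro _ ⟨v, hv, rfl⟩ _ ⟨w, hw, rfl⟩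
  simp [hv.1, hw.1]

theorem eVariationOn_max_eq (f : ℝ → E) {s t u : ℝ} (hu : u ∈ Icc s t) :
    eVariationOn (fun v => f (max u v)) (Icc s t) = eVariationOn f (Icc u t) := by
  rw [← eVariationOn_Icc_add_Icc _ hu.1 hu.2,
    eVariationOn.constant_on (s := Icc s u), zero_add]
  · exact eVariationOn.congr fun v hv => by simp [hv.1]
  · rintro _ ⟨v, hv, rfl⟩ _ ⟨w, hw, rfl⟩
    simp [hv.2, hw.2]

/-- The variation of a continuous path of finite length takes all intermediate values. -/
theorem exists_eVariationOn_Icc_eq {f : ℝ → E} (hf : Continuous f) {s t : ℝ} (hst : s ≤ t)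
    (hfin : eVariationOn f (Icc s t) ≠ ⊤) {c : ENNReal} (hc : c ≤ eVariationOn f (Icc s t)) :
    ∃ u ∈ Icc s t, eVariationOn f (Icc s u) = c := by
  have hA := lowerSemicontinuous_eVariationOn_comp hf (Icc s t) (p := min) fun v => by fun_prop
  have hB := lowerSemicontinuous_eVariationOn_comp hf (Icc s t) (p := max) fun v => by fun_prop
  obtain ⟨u, hu, hu1, hu2⟩ := isPreconnected_closed_iff.1 (isPreconnected_Icc (a := s) (b := t))
    _ _ (hA.isClosed_preimage c) (hB.isClosed_preimage (eVariationOn f (Icc s t) - c))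
    (fun u hu => by
      by_contra h
      simp only [mem_union, mem_preimage, mem_Iic, eVariationOn_min_eq f hu,
        eVariationOn_max_eq f hu, not_or, not_le] at h
      have := ENNReal.add_lt_add h.1 h.2
      rw [eVariationOn_Icc_add_Icc f hu.1 hu.2, add_tsub_cancel_of_le hc] at this
      exact this.false)
    ⟨s, left_mem_Icc.2 hst, by
      simp [eVariationOn_min_eq f (left_mem_Icc.2 hst), eVariationOn.subsingleton]⟩
    ⟨t, right_mem_Icc.2 hst, by
      simp [eVariationOn_max_eq f (right_mem_Icc.2 hst), eVariationOn.subsingleton]⟩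
  simp only [mem_preimage, mem_Iic, eVariationOn_min_eq f hu, eVariationOn_max_eq f hu] at hu1 hu2
  refine ⟨u, hu, le_antisymm hu1 ?_⟩
  have h1 := eVariationOn_Icc_add_Icc f hu.1 hu.2
  have h2 : eVariationOn f (Icc s t) - c ≠ ⊤ := ne_top_of_le_ne_top hfin tsub_le_self
  refine ENNReal.le_of_add_le_add_right h2 ?_
  rw [add_tsub_cancel_of_le hc]
  exact h1.symm.le.trans (by gcongr)

end Variation

section PathLength

variable {Y : Type*} [PseudoEMetricSpace Y] {X : Set Y} {ρ : Y → Y → ENNReal}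

/-- The infimum of path lengths satisfies the triangle inequality. -/
theorem iInf_length_triangle
    (hρ : ∀ a x, ρ a x = ⨅ (g : ℝ → Y) (_ : Continuous g) (_ : ∀ t, g t ∈ X)
      (s : ℝ) (t : ℝ) (_ : s ≤ t) (_ : g s = a) (_ : g t = x),
        eVariationOn g (Icc s t)) (a y x : Y) :
    ρ a x ≤ ρ a y + ρ y x := by
  rw [hρ a y, hρ y x]
  simp only [ENNReal.iInf_add, ENNReal.add_iInf, le_iInf_iff]
  intro h hh hhX s' t' hst' hs' ht' g hg hgX s t hst hs ht
  let k : ℝ → Y := fun u => if u ≤ t then g u else h (u - t + s')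
  have hk : Continuous k := by
    refine Continuous.if_le hg (by fun_prop) continuous_id continuous_const ?_
    rintro u rfl
    simp [ht, hs']
  have hkX : ∀ u, k u ∈ X := fun u => by
    by_cases hu : u ≤ t <;> simp [k, hu, hgX, hhX]
  have hk1 : k s = a := by simp [k, hst, hs]
  have hk2 : k (t' - s' + t) = x := by
    by_cases hle : t' - s' + t ≤ t
    · obtain rfl : s' = t' := by linarith
      simp [k, ht, ← hs', ht']
    · simp [k, hle, ht']
  have hle : ρ a x ≤ eVariationOn k (Icc s (t' - s' + t)) := by
    rw [hρ a x]
    exact iInf_le_of_le k <| iInf_le_of_le hk <| iInf_le_of_le hkX <| iInf_le_of_le s <|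
      iInf_le_of_le _ <| iInf_le_of_le (by linarith) <| iInf_le_of_le hk1 <| iInf_le _ hk2
  refine hle.trans ?_
  rw [← eVariationOn_Icc_add_Icc k hst (by linarith : t ≤ t' - s' + t), add_comm]
  have hk_left : EqOn k g (Icc s t) := fun u hu => by simp [k, hu.2]
  have hk_right : EqOn k (h ∘ fun u => u - t + s') (Icc t (t' - s' + t)) := fun u hu => by
    by_cases hut : u ≤ t
    · obtain rfl : u = t := le_antisymm hut hu.1
      simp [k, ht, hs']
    · simp [k, hut]
  rw [eVariationOn.congr hk_left, eVariationOn.congr hk_right, add_comm]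
  refine add_le_add_right ?_ _
  refine eVariationOn.comp_le_of_monotoneOn h _ (fun u _ v _ huv => by simpa using huv) ?_
  rintro u ⟨hu1, hu2⟩
  constructor <;> linarith

/-- For every `ε > 0` there is an almost minimising path parametrised by arc length. -/
theorem exists_almost_minimising
    (hρ : ∀ a x, ρ a x = ⨅ (g : ℝ → Y) (_ : Continuous g) (_ : ∀ t, g t ∈ X)
      (s : ℝ) (t : ℝ) (_ : s ≤ t) (_ : g s = a) (_ : g t = x),
        eVariationOn g (Icc s t))
    {a x : Y} {b : ℝ} (hb : ρ a x = ENNReal.ofReal b) {ε : ℝ} (hε : 0 < ε) (hb0 : 0 ≤ b) :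
    ∃ g : ℝ → Y, edist a (g 0) = 0 ∧ edist (g b) x ≤ ENNReal.ofReal ε ∧
      (∀ u ∈ Icc 0 b, ∀ v ∈ Icc 0 b, edist (g u) (g v) ≤ edist u v) ∧ (∀ u, g u ∈ X) ∧
      ∀ u ∈ Icc 0 b, ρ a (g u) ≤ ENNReal.ofReal u ∧
        ρ (g u) x ≤ ENNReal.ofReal (b - u + ε) := by
  have hlen : ∀ (f : ℝ → Y), Continuous f → (∀ t, f t ∈ X) → ∀ s t, s ≤ t →
      ρ (f s) (f t) ≤ eVariationOn f (Icc s t) := fun f hf hfX s t hst => by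
    rw [hρ]
    exact iInf_le_of_le f <| iInf_le_of_le hf <| iInf_le_of_le hfX <| iInf_le_of_le s <|
      iInf_le_of_le t <| iInf_le_of_le hst <| iInf_le_of_le rfl <| iInf_le _ rfl
  have hlt : ρ a x < ENNReal.ofReal (b + ε) := by
    rw [hb]
    exact (ENNReal.ofReal_lt_ofReal_iff (by linarith)).2 (by linarith)
  rw [hρ] at hlt
  simp only [iInf_lt_iff] at hlt
  obtain ⟨f, hf, hfX, s, t, hst, rfl, rfl, hlt⟩ := hlt
  have hfin : eVariationOn f (Icc s t) ≠ ⊤ := hlt.ne_top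
  have hex : ∀ c, ∃ u, c ∈ Icc 0 b → u ∈ Icc s t ∧
      eVariationOn f (Icc s u) = ENNReal.ofReal c := fun c => by
    by_cases hc : c ∈ Icc 0 b
    · obtain ⟨u, hu, huc⟩ := exists_eVariationOn_Icc_eq hf hst hfin
        (c := ENNReal.ofReal c) ((ENNReal.ofReal_le_ofReal hc.2).trans
          (hb ▸ hlen f hf hfX s t hst))
      exact ⟨u, fun _ => ⟨hu, huc⟩⟩
    · exact ⟨s, fun h => absurd h hc⟩
  choose τ hτ using hex
  have htail : ∀ u ∈ Icc 0 b, eVariationOn f (Icc (τ u) t) ≤ ENNReal.ofReal (b - u + ε) :=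
    fun u hu => by
      refine ENNReal.le_of_add_le_add_left (ENNReal.ofReal_ne_top (r := u)) ?_
      rw [← ENNReal.ofReal_add hu.1 (by linarith [hu.2]), ← (hτ u hu).2,
        eVariationOn_Icc_add_Icc f (hτ u hu).1.1 (hτ u hu).1.2]
      exact hlt.le.trans (ENNReal.ofReal_le_ofReal (by linarith))
  have h0 : (0 : ℝ) ∈ Icc 0 b := left_mem_Icc.2 hb0
  have hbb : b ∈ Icc 0 b := right_mem_Icc.2 hb0
  refine ⟨f ∘ τ, ?_, ?_, ?_, fun u => hfX _, fun u hu => ⟨?_, ?_⟩⟩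
  · have := eVariationOn.edist_le f (left_mem_Icc.2 (hτ 0 h0).1.1) (right_mem_Icc.2 (hτ 0 h0).1.1)
    simpa [(hτ 0 h0).2] using this
  · have := eVariationOn.edist_le f (left_mem_Icc.2 (hτ b hbb).1.2)
      (right_mem_Icc.2 (hτ b hbb).1.2)
    simpa using this.trans (htail b hbb)
  · intro u hu v hv
    wlog huv : τ u ≤ τ v generalizing u v
    · rw [edist_comm, edist_comm u]
      exact this v hv u hu (le_of_not_ge huv)
    refine (eVariationOn.edist_le f (left_mem_Icc.2 huv) (right_mem_Icc.2 huv)).trans ?_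
    refine ENNReal.le_of_add_le_add_left (ENNReal.ofReal_ne_top (r := u)) ?_
    rw [← (hτ u hu).2, eVariationOn_Icc_add_Icc f (hτ u hu).1.1 huv, (hτ u hu).2, (hτ v hv).2,
      edist_dist, ← ENNReal.ofReal_add hu.1 dist_nonneg]
    refine ENNReal.ofReal_le_ofReal ?_
    rw [dist_comm, Real.dist_eq]
    linarith [le_abs_self (v - u)]
  · exact (hlen f hf hfX _ _ (hτ u hu).1.1).trans (hτ u hu).2.le
  · exact (hlen f hf hfX _ _ (hτ u hu).1.2).trans (htail u hu)

end PathLength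


/-- existence of a unit-speed minimising path (with values in the ambient
boundedly compact space `Y`) for the geodesic pseudometric `ρ` of `X ⊆ Y`, defined via
infima of lengths (total variations) of continuous paths in `X`. -/
theorem existence_minimising_path {Y : Type*} [MetricSpace Y] [ProperSpace Y] (X : Set Y)
    (ρ : Y → Y → ENNReal)
    (hρ : ∀ a x, ρ a x = ⨅ (g : ℝ → Y) (_ : Continuous g) (_ : ∀ t, g t ∈ X)
      (s : ℝ) (t : ℝ) (_ : s ≤ t) (_ : g s = a) (_ : g t = x),
        eVariationOn g (Set.Icc s t))
    (hcont : ContinuousOn (fun p : Y × Y => ρ p.1 p.2) (X ×ˢ X))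
    (a x : Y) (ha : a ∈ X) (hx : x ∈ X) (b : ℝ) (hb0 : 0 ≤ b)
    (hb : ρ a x = ENNReal.ofReal b) :
    ∃ g : ℝ → Y, g 0 = a ∧ g b = x ∧ LipschitzWith 1 g ∧
      ∀ υ : ℝ, 0 ≤ υ → υ ≤ b → g υ ∈ X → ρ a (g υ) = ENNReal.ofReal υ := by
  have hpos : ∀ n : ℕ, (0 : ℝ) < 1 / ((n : ℝ) + 1) := fun n => Nat.one_div_pos_of_nat
  choose G hG0 hGb hGlip hGX hGρ using fun n : ℕ => exists_almost_minimising hρ hb (hpos n) hb0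
  have h0 : (0 : ℝ) ∈ Icc 0 b := left_mem_Icc.2 hb0
  have hbb : b ∈ Icc 0 b := right_mem_Icc.2 hb0
  let U : Ultrafilter ℕ := hyperfilter ℕ
  have hU : (U : Filter ℕ) ≤ atTop := Nat.hyperfilter_le_atTop
  have hlim : ∀ u : Icc 0 b, ∃ y, Tendsto (fun n => G n u) U (𝓝 y) := fun u => by
    obtain ⟨y, -, hy⟩ := (isCompact_closedBall a b).ultrafilter_le_nhds
      (U.map fun n => G n u) <| le_principal_iff.2 <| Ultrafilter.mem_map.2 <|
        Eventually.of_forall fun n : ℕ => by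
        have h := hGlip n u u.2 0 h0
        rw [← edist_eq_zero.1 (hG0 n), edist_dist, edist_dist,
          ENNReal.ofReal_le_ofReal_iff dist_nonneg] at h
        refine h.trans ?_
        rw [Real.dist_eq, sub_zero, abs_of_nonneg u.2.1]
        exact u.2.2
    exact ⟨y, hy⟩
  choose h hh using hlim
  have hh_eq : ∀ u (hu : u ∈ Icc 0 b), Tendsto (fun n => G n u) U (𝓝 (h (projIcc 0 b hb0 u))) :=
    fun u hu => by
      rw [projIcc_of_mem hb0 hu]
      exact hh ⟨u, hu⟩
  have hε : Tendsto (fun n : ℕ => 1 / ((n : ℝ) + 1)) U (𝓝 0) :=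
    tendsto_one_div_add_atTop_nhds_zero_nat.mono_left hU
  refine ⟨fun u => h (projIcc 0 b hb0 u), ?_, ?_, ?_, fun u hu0 hub hgX => ?_⟩
  · refine tendsto_nhds_unique (hh_eq 0 h0) ?_
    simp only [← edist_eq_zero.1 (hG0 _)]
    exact tendsto_const_nhds
  · have h1 : Tendsto (fun n => edist (G n b) x) U (𝓝 0) := by
      refine tendsto_of_tendsto_of_tendsto_of_le_of_le tendsto_const_nhds ?_
        (fun _ => zero_le) hGb
      simpa using ENNReal.tendsto_ofReal hε
    exact tendsto_nhds_unique (hh_eq b hbb) (tendsto_iff_edist_tendsto_0.2 h1)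
  · refine LipschitzWith.comp (Kg := 1) (Kf := 1) (f := h) (fun u v => ?_)
      (LipschitzWith.projIcc hb0) |>.weaken (by simp)
    rw [ENNReal.coe_one, one_mul]
    exact le_of_tendsto ((hh u).edist (hh v)) <| Eventually.of_forall fun n =>
      hGlip n u u.2 v v.2
  · have hu : u ∈ Icc 0 b := ⟨hu0, hub⟩
    set y := h (projIcc 0 b hb0 u)
    have htend : Tendsto (fun n => G n u) U (𝓝 y) := hh_eq u hu
    have h1 : Tendsto (fun n => ρ a (G n u)) U (𝓝 (ρ a y)) :=
      (hcont (a, y) ⟨ha, hgX⟩).tendsto.comp <| tendsto_nhdsWithin_iff.2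
        ⟨tendsto_const_nhds.prodMk_nhds htend, Eventually.of_forall fun n => ⟨ha, hGX n u⟩⟩
    have h2 : Tendsto (fun n => ρ (G n u) x) U (𝓝 (ρ y x)) :=
      (hcont (y, x) ⟨hgX, hx⟩).tendsto.comp <| tendsto_nhdsWithin_iff.2
        ⟨htend.prodMk_nhds tendsto_const_nhds, Eventually.of_forall fun n => ⟨hGX n u, hx⟩⟩
    have h3 : ρ a y ≤ ENNReal.ofReal u :=
      le_of_tendsto h1 <| Eventually.of_forall fun n => (hGρ n u hu).1
    have h4 : ρ y x ≤ ENNReal.ofReal (b - u) := by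
      refine le_of_tendsto_of_tendsto' h2 ?_ fun n => (hGρ n u hu).2
      simpa using ENNReal.tendsto_ofReal (hε.const_add (b - u))
    refine le_antisymm h3 <| ENNReal.le_of_add_le_add_right
      (ENNReal.ofReal_ne_top (r := b - u)) ?_
    rw [← ENNReal.ofReal_add hu0 (sub_nonneg.2 hub), add_sub_cancel, ← hb]
    exact (iInf_length_triangle hρ a y x).trans (by gcongr)
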